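/- Let r > 0, p ≥ 1, 0 < ε < r, m ∈ ℕ, let E = ℝ^m with the Euclidean inner product, K and E₁ finite-dimensional real inner product spaces, T : E → K and A : E → E₁ linear maps, g ∈ K, f, q ∈ E₁, u ∈ E, γ > 0, and B = p(r−ε)^{p−1}/(2ε) + 3((r−ε)^p − r^p)/(4ε²). Assume ‖T‖ < 1, (1/√2)‖A‖ < 1, and γ|B| < ω < 1. Let v* be the unique minimizer over E of v ↦ ‖Tv − g‖² + γ ∑_{i=1}^m W_r^{p,ε}(v_i) + ω‖v − u‖² + (1/2)‖Av − (f+q)‖², and let (v^n)_{n≥0} be defined from any v⁰ ∈ E by the iteration v^{n+1}_i = S_p^{γ/3}( (1/3) { [(I − T*T) + (I − (1/2)A*A) + (1 − ω)I] v^n + T*g + (1/2)A*(f+q) + ω u }_i ) for i = 1, …, m. Set δ := (3 − ω)/(3 − γ|B|). Then 2/3 < δ < 1 and for every n ∈ ℕ one has ‖v^n − v*‖ ≤ (δ^n/(1−δ)) ‖v¹ − v⁰‖; in particular v^n → v* as n → ∞. -/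

import Mathlib

/-!
Each quadratic term `c‖Lv - y‖²` with `c‖L‖² ≤ 1` is majorised by `‖v - s(x)‖²` up to a constant,
with equality at `v = x`, where `s(x) = x - c L*(Lx - y)` is a Landweber step. Adding the three
majorants shows that a minimizer of the functional is a fixed point of one iteration: a proximal
step taken at the mean of the three Landweber steps. The first two steps are nonexpansive and the
third, coming from `ω‖v - u‖²`, is a `(1 - ω)`-contraction, so the mean is `(3 - ω)/3`-Lipschitz.
Since `W + |B|t²` is convex, the proximal map is `3/(3 - γ|B|)`-Lipschitz. The composition is thus a
`δ`-contraction, and the error bound is the a priori estimate of Banach's fixed point theorem.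

That `|B|` suffices as convexity modulus rests on `B ≤ 0` and `A₀ ≤ 0`, which follow from
Bernoulli's inequality.
-/

/-- The smoothed truncated power potential `W_r^{p,ε}`. -/
noncomputable def Wpot (r p ε t : ℝ) : ℝ :=
  if |t| ≤ r - ε then |t| ^ p
  else if |t| ≤ r + ε then
    (p * (r - ε) ^ (p - 1) / (12 * ε ^ 2) +
        (p * (r - ε) ^ (p - 1) / (2 * ε) +
          3 * ((r - ε) ^ p - r ^ p) / (4 * ε ^ 2)) / (3 * ε)) *
      (|t| - (r + ε)) ^ 3 +
    (p * (r - ε) ^ (p - 1) / (2 * ε) + 3 * ((r - ε) ^ p - r ^ p) / (4 * ε ^ 2)) *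
      (|t| - (r + ε)) ^ 2 + r ^ p
  else r ^ p

open Set Filter Topology

section Prox

variable {E : Type*} [NormedAddCommGroup E]

lemma add_mul_norm_sub_sq_le_of_strongConvexOn_of_isMinOn [NormedSpace ℝ E] {s : Set E} {F : E → ℝ}
    {k : ℝ} {x y : E} (hF : StrongConvexOn s k F) (hmin : IsMinOn F s x) (hx : x ∈ s)
    (hy : y ∈ s) : F x + k / 2 * ‖x - y‖ ^ 2 ≤ F y := by
  have segment_bound : ∀ l ∈ Ioo (0 : ℝ) 1, F x + (1 - l) * (k / 2 * ‖x - y‖ ^ 2) ≤ F y := by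
    rintro l ⟨hl0, hl1⟩
    have hconv := hF.2 hx hy (sub_nonneg.2 hl1.le) hl0.le (sub_add_cancel 1 l)
    have hle := hmin (hF.1 hx hy (sub_nonneg.2 hl1.le) hl0.le (sub_add_cancel 1 l))
    simp only [mem_ofPred_eq, smul_eq_mul] at hconv hle
    refine le_of_mul_le_mul_left ?_ hl0
    linarith
  have hlim : Tendsto (fun l : ℝ ↦ F x + (1 - l) * (k / 2 * ‖x - y‖ ^ 2)) (𝓝[>] 0)
      (𝓝 (F x + (1 - 0) * (k / 2 * ‖x - y‖ ^ 2))) :=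
    (Continuous.tendsto (by fun_prop) 0).mono_left nhdsWithin_le_nhds
  rw [sub_zero, one_mul] at hlim
  exact le_of_tendsto hlim (eventually_of_mem (Ioo_mem_nhdsGT one_pos) segment_bound)

/-- `x` is a proximal point of `ξ` for `J` with parameter `c`, normalised without the customary
factor `1/2` on the quadratic term. For nonconvex `J` a proximal point need not be unique. -/
def IsProx (J : E → ℝ) (c : ℝ) (ξ x : E) : Prop :=
  IsMinOn (fun w ↦ ‖w - ξ‖ ^ 2 + c * J w) univ x

variable [InnerProductSpace ℝ E] {J : E → ℝ} {b c : ℝ} {ξ η x y : E}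

lemma strongConvexOn_norm_sub_sq_add (hJ : ConvexOn ℝ univ fun w ↦ J w + b * ‖w‖ ^ 2)
    (hc : 0 ≤ c) (ξ : E) :
    StrongConvexOn univ (2 * (1 - c * b)) fun w ↦ ‖w - ξ‖ ^ 2 + c * J w := by
  rw [strongConvexOn_iff_convex]
  have haffine : ConvexOn ℝ univ fun w : E ↦ (-2 : ℝ) * inner ℝ ξ w + ‖ξ‖ ^ 2 :=
    (((-2 : ℝ) • innerₛₗ ℝ ξ).convexOn convex_univ).add_const _
  refine ((hJ.smul hc).add haffine).congr fun w _ ↦ ?_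
  simp only [Pi.add_apply, smul_eq_mul, norm_sub_sq_real, real_inner_comm]
  ring

lemma IsProx.norm_sub_le (hJ : ConvexOn ℝ univ fun w ↦ J w + b * ‖w‖ ^ 2) (hc : 0 ≤ c)
    (hx : IsProx J c ξ x) (hy : IsProx J c η y) : (1 - c * b) * ‖x - y‖ ≤ ‖ξ - η‖ := by
  have hgrowth_x := add_mul_norm_sub_sq_le_of_strongConvexOn_of_isMinOn
    (strongConvexOn_norm_sub_sq_add hJ hc ξ) hx (mem_univ x) (mem_univ y)
  have hgrowth_y := add_mul_norm_sub_sq_le_of_strongConvexOn_of_isMinOn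
    (strongConvexOn_norm_sub_sq_add hJ hc η) hy (mem_univ y) (mem_univ x)
  have hcross : ‖y - ξ‖ ^ 2 - ‖x - ξ‖ ^ 2 + ‖x - η‖ ^ 2 - ‖y - η‖ ^ 2 =
      2 * inner ℝ (x - y) (ξ - η) := by
    simp only [norm_sub_sq_real, inner_sub_left, inner_sub_right]
    ring
  have hmul : ‖x - y‖ * ((1 - c * b) * ‖x - y‖) ≤ ‖x - y‖ * ‖ξ - η‖ := by
    rw [norm_sub_rev y x] at hgrowth_y
    linarith [real_inner_le_norm (x - y) (ξ - η)]
  rcases (norm_nonneg (x - y)).eq_or_lt with hxy | hxy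
  · rw [← hxy, mul_zero]
    exact norm_nonneg _
  · exact le_of_mul_le_mul_left hmul hxy

lemma IsProx.eq (hJ : ConvexOn ℝ univ fun w ↦ J w + b * ‖w‖ ^ 2) (hc : 0 ≤ c) (hcb : c * b < 1)
    (hx : IsProx J c ξ x) (hy : IsProx J c ξ y) : x = y := by
  have h := hx.norm_sub_le hJ hc hy
  rw [sub_self, norm_zero] at h
  exact sub_eq_zero.1 <| norm_le_zero_iff.1 <| nonpos_of_mul_nonpos_right h (sub_pos.2 hcb)

end Prox

section Separable

variable {ι : Type*} [Fintype ι] {W : ℝ → ℝ}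

lemma convexOn_sum_apply_add_norm_sq {b : ℝ} (hW : ConvexOn ℝ univ fun t ↦ W t + b * t ^ 2) :
    ConvexOn ℝ univ fun v : EuclideanSpace ℝ ι ↦ ∑ i, W (v i) + b * ‖v‖ ^ 2 := by
  refine ⟨convex_univ, fun x _ y _ α β hα hβ hαβ ↦ ?_⟩
  simp only [EuclideanSpace.real_norm_sq_eq, Finset.mul_sum, ← Finset.sum_add_distrib,
    Finset.smul_sum]
  exact Finset.sum_le_sum fun i _ ↦ hW.2 (mem_univ (x i)) (mem_univ (y i)) hα hβ hαβ

lemma isProx_sum_apply {c : ℝ} {ξ x : EuclideanSpace ℝ ι}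
    (h : ∀ i s, (x i - ξ i) ^ 2 + c * W (x i) ≤ (s - ξ i) ^ 2 + c * W s) :
    IsProx (fun v : EuclideanSpace ℝ ι ↦ ∑ i, W (v i)) c ξ x := by
  intro w _
  simp only [mem_ofPred_eq, EuclideanSpace.real_norm_sq_eq, Finset.mul_sum,
    ← Finset.sum_add_distrib]
  exact Finset.sum_le_sum fun i _ ↦ h i (w i)

end Separable

section Landweber

open ContinuousLinearMap (adjoint)

variable {E F : Type*} [NormedAddCommGroup E] [InnerProductSpace ℝ E]
  [NormedAddCommGroup F] [InnerProductSpace ℝ F] {L : E →L[ℝ] F} {c : ℝ}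

lemma sum_three_norm_sub_sq_sub (x v s₁ s₂ s₃ : E) :
    (‖v - s₁‖ ^ 2 - ‖x - s₁‖ ^ 2) + (‖v - s₂‖ ^ 2 - ‖x - s₂‖ ^ 2) +
      (‖v - s₃‖ ^ 2 - ‖x - s₃‖ ^ 2) =
      3 * (‖v - (3 : ℝ)⁻¹ • (s₁ + s₂ + s₃)‖ ^ 2 - ‖x - (3 : ℝ)⁻¹ • (s₁ + s₂ + s₃)‖ ^ 2) := by
  simp only [norm_sub_sq_real, inner_smul_right, inner_add_right]
  ring

lemma mul_norm_apply_sq_le_norm_sq (hc : 0 ≤ c) (hL : c * ‖L‖ ^ 2 ≤ 1) (z : E) :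
    c * ‖L z‖ ^ 2 ≤ ‖z‖ ^ 2 :=
  calc c * ‖L z‖ ^ 2 ≤ c * (‖L‖ * ‖z‖) ^ 2 := by gcongr; exact L.le_opNorm z
    _ = c * ‖L‖ ^ 2 * ‖z‖ ^ 2 := by ring
    _ ≤ ‖z‖ ^ 2 := mul_le_of_le_one_left (by positivity) hL

variable [CompleteSpace E] [CompleteSpace F]

/-- One Landweber step, i.e. a gradient step of length `1/2`, for the functional
`v ↦ c‖Lv - y‖²`. -/
noncomputable def landweberStep (L : E →L[ℝ] F) (c : ℝ) (y : F) (x : E) : E :=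
  x - c • adjoint L (L x - y)

lemma landweberStep_sub (y : F) (x x' : E) :
    landweberStep L c y x - landweberStep L c y x' = (x - x') - c • adjoint L (L (x - x')) := by
  simp only [landweberStep, map_sub, smul_sub]
  abel

lemma norm_sub_smul_adjoint_apply_le (hc : 0 ≤ c) (hL : c * ‖L‖ ^ 2 ≤ 1) (z : E) :
    ‖z - c • adjoint L (L z)‖ ≤ ‖z‖ := by
  have hadj : c * ‖adjoint L (L z)‖ ^ 2 ≤ ‖L z‖ ^ 2 :=
    mul_norm_apply_sq_le_norm_sq hc (by rwa [LinearIsometryEquiv.norm_map]) (L z)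
  have hexpand : ‖z - c • adjoint L (L z)‖ ^ 2 =
      ‖z‖ ^ 2 - 2 * (c * ‖L z‖ ^ 2) + c * (c * ‖adjoint L (L z)‖ ^ 2) := by
    rw [norm_sub_sq_real, inner_smul_right, ContinuousLinearMap.adjoint_inner_right,
      real_inner_self_eq_norm_sq, norm_smul, Real.norm_of_nonneg hc]
    ring
  have hLz : 0 ≤ c * ‖L z‖ ^ 2 := by positivity
  refine le_of_sq_le_sq ?_ (norm_nonneg z)
  linarith [mul_le_mul_of_nonneg_left hadj hc]

lemma norm_landweberStep_sub_le (hc : 0 ≤ c) (hL : c * ‖L‖ ^ 2 ≤ 1) (y : F) (x x' : E) :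
    ‖landweberStep L c y x - landweberStep L c y x'‖ ≤ ‖x - x'‖ := by
  rw [landweberStep_sub]
  exact norm_sub_smul_adjoint_apply_le hc hL (x - x')

lemma landweberStep_id_sub (ω : ℝ) (u x x' : E) :
    landweberStep (.id ℝ E) ω u x - landweberStep (.id ℝ E) ω u x' = (1 - ω) • (x - x') := by
  rw [landweberStep_sub, ContinuousLinearMap.adjoint_id, sub_smul, one_smul]
  rfl

lemma mul_norm_sub_sq_add_norm_sub_landweberStep_sq_le (hc : 0 ≤ c) (hL : c * ‖L‖ ^ 2 ≤ 1) (y : F)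
    (x v : E) :
    c * ‖L v - y‖ ^ 2 + ‖x - landweberStep L c y x‖ ^ 2 ≤
      c * ‖L x - y‖ ^ 2 + ‖v - landweberStep L c y x‖ ^ 2 := by
  set d := c • adjoint L (L x - y) with hd
  have hinner : inner ℝ (v - x) d = c * inner ℝ (L (v - x)) (L x - y) := by
    rw [hd, inner_smul_right, ContinuousLinearMap.adjoint_inner_right]
  have hLv : ‖L v - y‖ ^ 2 =
      ‖L (v - x)‖ ^ 2 + 2 * inner ℝ (L (v - x)) (L x - y) + ‖L x - y‖ ^ 2 := by
    rw [← norm_add_sq_real, map_sub, sub_add_sub_cancel]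
  have hv : ‖v - landweberStep L c y x‖ ^ 2 =
      ‖v - x‖ ^ 2 + 2 * inner ℝ (v - x) d + ‖d‖ ^ 2 := by
    rw [← norm_add_sq_real, landweberStep, sub_sub_eq_add_sub, sub_add_eq_add_sub]
  have hx : x - landweberStep L c y x = d := sub_sub_cancel x d
  rw [hLv, hv, hx, hinner]
  linarith [mul_norm_apply_sq_le_norm_sq hc hL (v - x)]

end Landweber

section Iteration

variable {E K E₁ : Type*}
  [NormedAddCommGroup E] [InnerProductSpace ℝ E] [CompleteSpace E]
  [NormedAddCommGroup K] [InnerProductSpace ℝ K] [CompleteSpace K]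
  [NormedAddCommGroup E₁] [InnerProductSpace ℝ E₁] [CompleteSpace E₁]

/-- The mean of the Landweber steps for the terms `‖Tv - g‖²`, `(1/2)‖Av - y‖²` and `ω‖v - u‖²` of
the inner-loop functional; here `y` stands for `f + q`. -/
noncomputable def meanLandweberStep (T : E →L[ℝ] K) (A : E →L[ℝ] E₁) (g : K) (y : E₁) (u : E)
    (ω : ℝ) (x : E) : E :=
  (3 : ℝ)⁻¹ • (landweberStep T 1 g x + landweberStep A 2⁻¹ y x + landweberStep (.id ℝ E) ω u x)

variable {T : E →L[ℝ] K} {A : E →L[ℝ] E₁} {g : K} {y : E₁} {u : E} {ω : ℝ}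

open ContinuousLinearMap (adjoint) in
lemma meanLandweberStep_eq (x : E) :
    meanLandweberStep T A g y u ω x = (3 : ℝ)⁻¹ • ((x - adjoint T (T x)) +
      (x - (2 : ℝ)⁻¹ • adjoint A (A x)) + (1 - ω) • x + adjoint T g + (2 : ℝ)⁻¹ • adjoint A y +
      ω • u) := by
  simp only [meanLandweberStep, landweberStep, ContinuousLinearMap.adjoint_id,
    ContinuousLinearMap.id_apply, map_sub, one_smul]
  module

lemma norm_meanLandweberStep_sub_le (hT : ‖T‖ ^ 2 ≤ 1) (hA : 2⁻¹ * ‖A‖ ^ 2 ≤ 1) (hω : ω ≤ 1)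
    (x x' : E) :
    ‖meanLandweberStep T A g y u ω x - meanLandweberStep T A g y u ω x'‖ ≤
      (3 - ω) / 3 * ‖x - x'‖ := by
  have hTstep := norm_landweberStep_sub_le zero_le_one (by rwa [one_mul]) g x x'
  have hAstep := norm_landweberStep_sub_le (by norm_num) hA y x x'
  have hustep : ‖landweberStep (.id ℝ E) ω u x - landweberStep (.id ℝ E) ω u x'‖ =
      (1 - ω) * ‖x - x'‖ := by
    rw [landweberStep_id_sub, norm_smul, Real.norm_of_nonneg (sub_nonneg.2 hω)]
  rw [meanLandweberStep, meanLandweberStep, ← smul_sub, add_sub_add_comm, add_sub_add_comm,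
    norm_smul, Real.norm_of_nonneg (by norm_num)]
  linarith [norm_add₃_le (a := landweberStep T 1 g x - landweberStep T 1 g x')
    (b := landweberStep A 2⁻¹ y x - landweberStep A 2⁻¹ y x')
    (c := landweberStep (.id ℝ E) ω u x - landweberStep (.id ℝ E) ω u x')]

lemma isProx_meanLandweberStep_of_isMinimizer {J : E → ℝ} {γ : ℝ} (hT : ‖T‖ ^ 2 ≤ 1)
    (hA : 2⁻¹ * ‖A‖ ^ 2 ≤ 1) (hω0 : 0 ≤ ω) (hω1 : ω ≤ 1) {x : E}
    (hx : ∀ v, ‖T x - g‖ ^ 2 + γ * J x + ω * ‖x - u‖ ^ 2 + 1 / 2 * ‖A x - y‖ ^ 2 ≤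
      ‖T v - g‖ ^ 2 + γ * J v + ω * ‖v - u‖ ^ 2 + 1 / 2 * ‖A v - y‖ ^ 2) :
    IsProx J (γ / 3) (meanLandweberStep T A g y u ω x) x := by
  have hid : ω * ‖ContinuousLinearMap.id ℝ E‖ ^ 2 ≤ 1 :=
    mul_le_one₀ hω1 (by positivity) (pow_le_one₀ (norm_nonneg _) ContinuousLinearMap.norm_id_le)
  intro v _
  have hTmaj := mul_norm_sub_sq_add_norm_sub_landweberStep_sq_le zero_le_one
    (by rwa [one_mul]) g x v
  have hAmaj := mul_norm_sub_sq_add_norm_sub_landweberStep_sq_le (by norm_num) hA y x v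
  have humaj := mul_norm_sub_sq_add_norm_sub_landweberStep_sq_le hω0 hid u x v
  have hmean := sum_three_norm_sub_sq_sub x v (landweberStep T 1 g x) (landweberStep A 2⁻¹ y x)
    (landweberStep (.id ℝ E) ω u x)
  simp only [ContinuousLinearMap.id_apply] at humaj
  simp only [mem_ofPred_eq, meanLandweberStep]
  linarith [hx v]

lemma contractingWith_prox_comp_meanLandweberStep {J : E → ℝ} {b γ : ℝ} (hT : ‖T‖ ^ 2 ≤ 1)
    (hA : 2⁻¹ * ‖A‖ ^ 2 ≤ 1) (hJ : ConvexOn ℝ univ fun w ↦ J w + b * ‖w‖ ^ 2) (hγ : 0 ≤ γ)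
    (hωl : γ * b < ω) (hωu : ω ≤ 1) {P : E → E} (hP : ∀ ξ, IsProx J (γ / 3) ξ (P ξ)) :
    ContractingWith ((3 - ω) / (3 - γ * b)).toNNReal
      fun x ↦ P (meanLandweberStep T A g y u ω x) := by
  have hden : 0 < 3 - γ * b := by linarith
  refine ⟨?_, LipschitzWith.of_dist_le' fun x x' ↦ ?_⟩
  · rw [Real.toNNReal_lt_one, div_lt_one hden]
    linarith
  · rw [dist_eq_norm, dist_eq_norm, div_mul_eq_mul_div, le_div_iff₀ hden]
    have hprox := (hP (meanLandweberStep T A g y u ω x)).norm_sub_le hJ (by positivity)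
      (hP (meanLandweberStep T A g y u ω x'))
    have hmean := norm_meanLandweberStep_sub_le (g := g) (y := y) (u := u) hT hA hωu x x'
    linarith

end Iteration

section TruncatedPower

lemma hasDerivAt_ite_le {F : Type*} [NormedAddCommGroup F] [NormedSpace ℝ F] {f g f' g' : ℝ → F}
    {c t : ℝ} (hfg : f c = g c) (hfg' : f' c = g' c) (hf : t ≤ c → HasDerivAt f (f' t) t)
    (hg : c ≤ t → HasDerivAt g (g' t) t) :
    HasDerivAt (fun s ↦ if s ≤ c then f s else g s) (if t ≤ c then f' t else g' t) t := by
  rcases lt_trichotomy t c with htc | rfl | htc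
  · rw [if_pos htc.le]
    refine (hf htc.le).congr_of_eventuallyEq ?_
    filter_upwards [eventually_lt_nhds htc] with s hs using if_pos hs.le
  · rw [if_pos le_rfl, ← hasDerivWithinAt_univ, ← Iic_union_Ici (a := t)]
    have eqOn_right : ∀ s ∈ Ici t, (if s ≤ t then f s else g s) = g s := by
      rintro s hs
      split_ifs with hst
      · rw [hst.antisymm hs, hfg]
      · rfl
    refine .union ?_ ?_
    · exact (hf le_rfl).hasDerivWithinAt.congr (fun s hs ↦ if_pos hs) (if_pos le_rfl)
    · rw [hfg']
      exact (hg le_rfl).hasDerivWithinAt.congr eqOn_right (eqOn_right t self_mem_Ici)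
  · rw [if_neg htc.not_ge]
    refine (hg htc.le).congr_of_eventuallyEq ?_
    filter_upwards [eventually_gt_nhds htc] with s hs using if_neg hs.not_ge

lemma convexOn_univ_comp_abs_of_hasDerivAt {φ φ' : ℝ → ℝ}
    (hderiv : ∀ t, 0 ≤ t → HasDerivAt φ (φ' t) t) (hmono : MonotoneOn φ' (Ici 0))
    (hzero : 0 ≤ φ' 0) : ConvexOn ℝ univ fun t ↦ φ |t| := by
  have hcont : ContinuousOn φ (Ici 0) := fun t ht ↦ (hderiv t ht).continuousAt.continuousWithinAt
  have hint : interior (Ici (0 : ℝ)) ⊆ Ici 0 := interior_subset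
  have hφconv : ConvexOn ℝ (Ici 0) φ :=
    MonotoneOn.convexOn_of_deriv (convex_Ici 0) hcont
      (fun t ht ↦ (hderiv t (hint ht)).differentiableAt.differentiableWithinAt)
      ((hmono.mono hint).congr fun t ht ↦ (hderiv t (hint ht)).deriv.symm)
  have hφmono : MonotoneOn φ (Ici 0) :=
    monotoneOn_of_hasDerivWithinAt_nonneg (convex_Ici 0) hcont
      (fun t ht ↦ (hderiv t (hint ht)).hasDerivWithinAt)
      fun t ht ↦ hzero.trans (hmono self_mem_Ici (hint ht) (hint ht))
  have himage : (fun t : ℝ ↦ |t|) '' univ = Ici 0 :=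
    Subset.antisymm (image_subset_iff.2 fun t _ ↦ abs_nonneg t)
      fun t ht ↦ ⟨t, mem_univ t, abs_of_nonneg ht⟩
  have habs : ConvexOn ℝ univ fun t : ℝ ↦ |t| := convexOn_norm convex_univ
  exact ConvexOn.comp (by rwa [himage]) habs (by rwa [himage])

/-- The constant `B`: the quadratic coefficient, in powers of `t - (r + ε)`, of the cubic `π_p`
joining `t ^ p` to `r ^ p`. -/
noncomputable def quadraticCoeff (r p ε : ℝ) : ℝ :=
  p * (r - ε) ^ (p - 1) / (2 * ε) + 3 * ((r - ε) ^ p - r ^ p) / (4 * ε ^ 2)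

/-- The constant `A₀`: the leading coefficient of the cubic `π_p`. -/
noncomputable def cubicCoeff (r p ε : ℝ) : ℝ :=
  p * (r - ε) ^ (p - 1) / (12 * ε ^ 2) + quadraticCoeff r p ε / (3 * ε)

/-- The formula for `W_r^{p,ε}` on `[0, ∞)`, so that `Wpot r p ε t = truncPowProfile r p ε |t|`. -/
noncomputable def truncPowProfile (r p ε t : ℝ) : ℝ :=
  if t ≤ r - ε then t ^ p
  else if t ≤ r + ε then
    cubicCoeff r p ε * (t - (r + ε)) ^ 3 + quadraticCoeff r p ε * (t - (r + ε)) ^ 2 + r ^ p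
  else r ^ p

/-- The derivative of `truncPowProfile`. -/
noncomputable def truncPowProfileDeriv (r p ε t : ℝ) : ℝ :=
  if t ≤ r - ε then p * t ^ (p - 1)
  else if t ≤ r + ε then
    3 * cubicCoeff r p ε * (t - (r + ε)) ^ 2 + 2 * quadraticCoeff r p ε * (t - (r + ε))
  else 0

variable {r p ε : ℝ}

lemma quadraticCoeff_le (hp : 1 ≤ p) (hε : 0 < ε) (hεr : ε < r) :
    quadraticCoeff r p ε ≤ -(p * (r - ε) ^ (p - 1) / (4 * ε)) := by
  have ha : 0 < r - ε := sub_pos.2 hεr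
  have hbernoulli : (r - ε) ^ p + ε * (p * (r - ε) ^ (p - 1)) ≤ r ^ p := by
    have hs : 0 ≤ ε / (r - ε) := by positivity
    have h := one_add_mul_self_le_rpow_one_add (by linarith) hp (s := ε / (r - ε))
    rw [one_add_div ha.ne', sub_add_cancel, Real.div_rpow (by linarith) ha.le,
      le_div_iff₀ (by positivity)] at h
    refine le_of_eq_of_le ?_ h
    rw [Real.rpow_sub_one ha.ne']
    field_simp
  have hdiff : quadraticCoeff r p ε + p * (r - ε) ^ (p - 1) / (4 * ε) =
      3 * ((r - ε) ^ p + ε * (p * (r - ε) ^ (p - 1)) - r ^ p) / (4 * ε ^ 2) := by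
    rw [quadraticCoeff]
    field_simp
    ring
  have hnonpos : 3 * ((r - ε) ^ p + ε * (p * (r - ε) ^ (p - 1)) - r ^ p) / (4 * ε ^ 2) ≤ 0 :=
    div_nonpos_of_nonpos_of_nonneg (by linarith) (by positivity)
  linarith

lemma quadraticCoeff_nonpos (hp : 1 ≤ p) (hε : 0 < ε) (hεr : ε < r) :
    quadraticCoeff r p ε ≤ 0 := by
  have : 0 < r - ε := sub_pos.2 hεr
  exact (quadraticCoeff_le hp hε hεr).trans (neg_nonpos.2 (by positivity))

lemma cubicCoeff_nonpos (hp : 1 ≤ p) (hε : 0 < ε) (hεr : ε < r) : cubicCoeff r p ε ≤ 0 := by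
  have heq : cubicCoeff r p ε =
      (p * (r - ε) ^ (p - 1) / (4 * ε) + quadraticCoeff r p ε) / (3 * ε) := by
    rw [cubicCoeff]
    field_simp
    ring
  rw [heq]
  exact div_nonpos_of_nonpos_of_nonneg (by linarith [quadraticCoeff_le hp hε hεr]) (by positivity)

lemma cubic_left_knot (hε : ε ≠ 0) :
    cubicCoeff r p ε * (r - ε - (r + ε)) ^ 3 + quadraticCoeff r p ε * (r - ε - (r + ε)) ^ 2 +
      r ^ p = (r - ε) ^ p := by
  rw [show r - ε - (r + ε) = -(2 * ε) by ring, cubicCoeff, quadraticCoeff]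
  field_simp
  ring

lemma cubic_deriv_left_knot (hε : ε ≠ 0) :
    3 * cubicCoeff r p ε * (r - ε - (r + ε)) ^ 2 +
      2 * quadraticCoeff r p ε * (r - ε - (r + ε)) = p * (r - ε) ^ (p - 1) := by
  rw [show r - ε - (r + ε) = -(2 * ε) by ring, cubicCoeff]
  field_simp
  ring

lemma hasDerivAt_truncPowProfile (hp : 1 ≤ p) (hε : 0 < ε) (t : ℝ) :
    HasDerivAt (truncPowProfile r p ε) (truncPowProfileDeriv r p ε t) t := by
  have hknots : r - ε ≤ r + ε := by linarith
  refine hasDerivAt_ite_le (f' := fun t ↦ p * t ^ (p - 1))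
    (g' := fun t ↦ if t ≤ r + ε then
      3 * cubicCoeff r p ε * (t - (r + ε)) ^ 2 + 2 * quadraticCoeff r p ε * (t - (r + ε)) else 0)
    ?_ ?_ (fun _ ↦ Real.hasDerivAt_rpow_const (.inr hp)) fun _ ↦ ?_
  · rw [if_pos hknots, cubic_left_knot hε.ne']
  · rw [if_pos hknots, cubic_deriv_left_knot hε.ne']
  · refine hasDerivAt_ite_le (g' := fun _ ↦ 0)
      (f' := fun t ↦ 3 * cubicCoeff r p ε * (t - (r + ε)) ^ 2 +
        2 * quadraticCoeff r p ε * (t - (r + ε)))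
      (by simp) (by simp) (fun _ ↦ ?_) fun _ ↦ hasDerivAt_const t (r ^ p)
    have hsub := (hasDerivAt_id t).sub_const (r + ε)
    refine ((((hsub.pow 3).const_mul (cubicCoeff r p ε)).add
      ((hsub.pow 2).const_mul (quadraticCoeff r p ε))).add_const (r ^ p)).congr_deriv ?_
    simp only [id_eq, Nat.cast_ofNat, Nat.add_one_sub_one]
    ring

lemma truncPowProfileDeriv_of_mem_Icc (hε : ε ≠ 0) {t : ℝ} (ht : t ∈ Icc (r - ε) (r + ε)) :
    truncPowProfileDeriv r p ε t =
      3 * cubicCoeff r p ε * (t - (r + ε)) ^ 2 + 2 * quadraticCoeff r p ε * (t - (r + ε)) := by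
  rcases ht.1.eq_or_lt with rfl | hlt
  · rw [truncPowProfileDeriv, if_pos le_rfl, cubic_deriv_left_knot hε]
  · rw [truncPowProfileDeriv, if_neg hlt.not_ge, if_pos ht.2]

lemma truncPowProfileDeriv_of_ge (hε : 0 < ε) {t : ℝ} (ht : r + ε ≤ t) :
    truncPowProfileDeriv r p ε t = 0 := by
  rcases ht.eq_or_lt with rfl | hlt
  · rw [truncPowProfileDeriv_of_mem_Icc hε.ne' ⟨by linarith, le_rfl⟩, sub_self]
    ring
  · rw [truncPowProfileDeriv, if_neg (by linarith), if_neg hlt.not_ge]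

lemma monotoneOn_truncPowProfileDeriv_add (hp : 1 ≤ p) (hε : 0 < ε) (hεr : ε < r) :
    MonotoneOn (fun t ↦ truncPowProfileDeriv r p ε t + |quadraticCoeff r p ε| * (2 * t))
      (Ici 0) := by
  have ha : 0 ≤ r - ε := by linarith
  have hknots : r - ε ≤ r + ε := by linarith
  have hA := cubicCoeff_nonpos hp hε hεr
  rw [abs_of_nonpos (quadraticCoeff_nonpos hp hε hεr)]
  set B := quadraticCoeff r p ε with hB
  have hB0 : 0 ≤ -B := neg_nonneg.2 (quadraticCoeff_nonpos hp hε hεr)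
  have mono_power : MonotoneOn (fun t ↦ truncPowProfileDeriv r p ε t + -B * (2 * t))
      (Icc 0 (r - ε)) := by
    intro x hx y hy hxy
    have hpow : x ^ (p - 1) ≤ y ^ (p - 1) := Real.rpow_le_rpow hx.1 hxy (by linarith)
    simp only [truncPowProfileDeriv, if_pos hx.2, if_pos hy.2]
    gcongr
  -- On the cubic piece the linear terms in `t` cancel, leaving `3 A₀ (t - (r + ε))²`.
  have mono_cubic : MonotoneOn (fun t ↦ truncPowProfileDeriv r p ε t + -B * (2 * t))
      (Icc (r - ε) (r + ε)) := by
    intro x hx y hy hxy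
    have hsq : (y - (r + ε)) ^ 2 ≤ (x - (r + ε)) ^ 2 :=
      sq_le_sq.2 (by rw [abs_of_nonpos, abs_of_nonpos] <;> linarith [hx.2, hy.2])
    simp only [truncPowProfileDeriv_of_mem_Icc hε.ne' hx,
      truncPowProfileDeriv_of_mem_Icc hε.ne' hy, ← hB]
    linarith [mul_le_mul_of_nonpos_left hsq hA]
  have mono_const : MonotoneOn (fun t ↦ truncPowProfileDeriv r p ε t + -B * (2 * t))
      (Ici (r + ε)) := by
    intro x hx y hy hxy
    simp only [truncPowProfileDeriv_of_ge hε hx, truncPowProfileDeriv_of_ge hε hy]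
    gcongr
  have mono_right := mono_cubic.union_right mono_const (isGreatest_Icc hknots) isLeast_Ici
  rw [Icc_union_Ici_eq_Ici hknots] at mono_right
  rw [← Icc_union_Ici_eq_Ici ha]
  exact mono_power.union_right mono_right (isGreatest_Icc ha) isLeast_Ici

lemma convexOn_Wpot_add_sq (hp : 1 ≤ p) (hε : 0 < ε) (hεr : ε < r) :
    ConvexOn ℝ univ fun t ↦ Wpot r p ε t + |quadraticCoeff r p ε| * t ^ 2 := by
  have hderiv : ∀ t, 0 ≤ t →
      HasDerivAt (fun t ↦ truncPowProfile r p ε t + |quadraticCoeff r p ε| * t ^ 2)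
        (truncPowProfileDeriv r p ε t + |quadraticCoeff r p ε| * (2 * t)) t := fun t _ ↦
    ((hasDerivAt_truncPowProfile hp hε t).add
      ((hasDerivAt_pow 2 t).const_mul |quadraticCoeff r p ε|)).congr_deriv (by norm_num)
  have hzero : 0 ≤ truncPowProfileDeriv r p ε 0 + |quadraticCoeff r p ε| * (2 * 0) := by
    rw [truncPowProfileDeriv, if_pos (by linarith), mul_zero, mul_zero, add_zero]
    exact mul_nonneg (by linarith) (Real.rpow_nonneg le_rfl _)
  refine (convexOn_univ_comp_abs_of_hasDerivAt hderiv
    (monotoneOn_truncPowProfileDeriv_add hp hε hεr) hzero).congr fun t _ ↦ ?_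
  simp only [sq_abs]
  rfl

end TruncatedPower

lemma inv_two_mul_sq_le_one {x : ℝ} (hx0 : 0 ≤ x) (hx : 1 / √2 * x ≤ 1) : 2⁻¹ * x ^ 2 ≤ 1 := by
  have h := pow_le_one₀ (n := 2) (by positivity) hx
  rwa [mul_pow, div_pow, Real.sq_sqrt zero_le_two, one_pow, one_div] at h

open ContinuousLinearMap (adjoint) in
theorem statement18_general {E K E₁ : Type*}
    [NormedAddCommGroup E] [InnerProductSpace ℝ E] [CompleteSpace E]
    [NormedAddCommGroup K] [InnerProductSpace ℝ K] [CompleteSpace K]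
    [NormedAddCommGroup E₁] [InnerProductSpace ℝ E₁] [CompleteSpace E₁]
    {T : E →L[ℝ] K} {A : E →L[ℝ] E₁} {g : K} {y : E₁} {u : E} {J : E → ℝ} {b γ ω : ℝ}
    (hJ : ConvexOn ℝ univ fun w ↦ J w + b * ‖w‖ ^ 2) (hb : 0 ≤ b) (hγ : 0 ≤ γ)
    (hT : ‖T‖ ≤ 1) (hA : 1 / √2 * ‖A‖ ≤ 1) (hωl : γ * b < ω) (hωu : ω < 1)
    {P : E → E} (hP : ∀ ξ, IsProx J (γ / 3) ξ (P ξ)) {vstar : E}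
    (hvstar : ∀ v, ‖T vstar - g‖ ^ 2 + γ * J vstar + ω * ‖vstar - u‖ ^ 2 +
        1 / 2 * ‖A vstar - y‖ ^ 2 ≤
      ‖T v - g‖ ^ 2 + γ * J v + ω * ‖v - u‖ ^ 2 + 1 / 2 * ‖A v - y‖ ^ 2)
    {v : ℕ → E}
    (hiter : ∀ n, v (n + 1) = P ((3 : ℝ)⁻¹ • ((v n - adjoint T (T (v n))) +
      (v n - (2 : ℝ)⁻¹ • adjoint A (A (v n))) + (1 - ω) • v n + adjoint T g +
      (2 : ℝ)⁻¹ • adjoint A y + ω • u))) :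
    2 / 3 < (3 - ω) / (3 - γ * b) ∧ (3 - ω) / (3 - γ * b) < 1 ∧
      (∀ n, ‖v n - vstar‖ ≤
        ((3 - ω) / (3 - γ * b)) ^ n / (1 - (3 - ω) / (3 - γ * b)) * ‖v 1 - v 0‖) ∧
      Tendsto v atTop (𝓝 vstar) := by
  have hγb : 0 ≤ γ * b := mul_nonneg hγ hb
  have hden : 0 < 3 - γ * b := by linarith
  have hT2 : ‖T‖ ^ 2 ≤ 1 := pow_le_one₀ (norm_nonneg T) hT
  have hA2 := inv_two_mul_sq_le_one (norm_nonneg A) hA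
  have hδl : 2 / 3 < (3 - ω) / (3 - γ * b) := by rw [lt_div_iff₀ hden]; linarith
  have hδu : (3 - ω) / (3 - γ * b) < 1 := by rw [div_lt_one hden]; linarith
  set Φ : E → E := fun x ↦ P (meanLandweberStep T A g y u ω x)
  have hΦ : ContractingWith _ Φ :=
    contractingWith_prox_comp_meanLandweberStep hT2 hA2 hJ hγ hωl hωu.le hP
  have hfix : Φ vstar = vstar :=
    (hP _).eq hJ (by positivity) (by linarith)
      (isProx_meanLandweberStep_of_isMinimizer hT2 hA2 (by linarith) hωu.le hvstar)
  have hstep : ∀ n, v (n + 1) = Φ (v n) := fun n ↦ by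
    rw [hiter, ← meanLandweberStep_eq]
  have hv : ∀ n, v n = Φ^[n] (v 0) := fun n ↦ by
    induction n with
    | zero => rfl
    | succ n ih => rw [hstep, ih, Function.iterate_succ_apply']
  refine ⟨hδl, hδu, fun n ↦ ?_, ?_⟩
  · have hbound := hΦ.apriori_dist_iterate_fixedPoint_le (v 0) n
    rw [← hΦ.fixedPoint_unique hfix, ← hv, ← hstep, dist_eq_norm, dist_eq_norm',
      Real.coe_toNNReal _ (by linarith)] at hbound
    rwa [div_mul_eq_mul_div, mul_comm]
  · rw [hΦ.fixedPoint_unique hfix, funext hv]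
    exact hΦ.tendsto_iterate_fixedPoint (v 0)

/-- Linear convergence of the iterative thresholding algorithm for the
inner-loop functional: with `δ = (3 − ω)/(3 − γ|B|)` one has `2/3 < δ < 1` and
`‖vⁿ − v*‖ ≤ (δⁿ/(1 − δ))‖v¹ − v⁰‖`; in particular `vⁿ → v*`. -/
theorem statement18 (r p ε : ℝ) (hr : 0 < r) (hp : 1 ≤ p) (hε0 : 0 < ε) (hεr : ε < r)
    (m : ℕ) {K E₁ : Type*}
    [NormedAddCommGroup K] [InnerProductSpace ℝ K] [FiniteDimensional ℝ K]
    [NormedAddCommGroup E₁] [InnerProductSpace ℝ E₁] [FiniteDimensional ℝ E₁]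
    (T : EuclideanSpace ℝ (Fin m) →L[ℝ] K) (A : EuclideanSpace ℝ (Fin m) →L[ℝ] E₁)
    (g : K) (f q : E₁) (u : EuclideanSpace ℝ (Fin m)) (γ ω : ℝ) (hγ : 0 < γ)
    (hT : ‖T‖ < 1) (hAn : 1 / Real.sqrt 2 * ‖A‖ < 1)
    (hωl : γ * |p * (r - ε) ^ (p - 1) / (2 * ε) +
        3 * ((r - ε) ^ p - r ^ p) / (4 * ε ^ 2)| < ω)
    (hωu : ω < 1)
    (S : ℝ → ℝ)
    (hS : ∀ ξ s : ℝ, (S ξ - ξ) ^ 2 + γ / 3 * Wpot r p ε (S ξ) ≤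
      (s - ξ) ^ 2 + γ / 3 * Wpot r p ε s)
    (vstar : EuclideanSpace ℝ (Fin m))
    (hvstar : ∀ v : EuclideanSpace ℝ (Fin m),
      ‖T vstar - g‖ ^ 2 + γ * ∑ i, Wpot r p ε (vstar i) + ω * ‖vstar - u‖ ^ 2 +
          1 / 2 * ‖A vstar - (f + q)‖ ^ 2 ≤
        ‖T v - g‖ ^ 2 + γ * ∑ i, Wpot r p ε (v i) + ω * ‖v - u‖ ^ 2 +
          1 / 2 * ‖A v - (f + q)‖ ^ 2)
    (v : ℕ → EuclideanSpace ℝ (Fin m))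
    (hiter : ∀ n : ℕ, ∀ i : Fin m, v (n + 1) i = S ((3 : ℝ)⁻¹ *
      (((v n - (ContinuousLinearMap.adjoint T) (T (v n))) +
          (v n - (2 : ℝ)⁻¹ • (ContinuousLinearMap.adjoint A) (A (v n))) +
          (1 - ω) • v n +
          (ContinuousLinearMap.adjoint T) g +
          (2 : ℝ)⁻¹ • (ContinuousLinearMap.adjoint A) (f + q) + ω • u) i))) :
    (2 / 3 < (3 - ω) / (3 - γ * |p * (r - ε) ^ (p - 1) / (2 * ε) +
        3 * ((r - ε) ^ p - r ^ p) / (4 * ε ^ 2)|)) ∧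
    ((3 - ω) / (3 - γ * |p * (r - ε) ^ (p - 1) / (2 * ε) +
        3 * ((r - ε) ^ p - r ^ p) / (4 * ε ^ 2)|) < 1) ∧
    (∀ n : ℕ, ‖v n - vstar‖ ≤
      ((3 - ω) / (3 - γ * |p * (r - ε) ^ (p - 1) / (2 * ε) +
          3 * ((r - ε) ^ p - r ^ p) / (4 * ε ^ 2)|)) ^ n /
        (1 - (3 - ω) / (3 - γ * |p * (r - ε) ^ (p - 1) / (2 * ε) +
          3 * ((r - ε) ^ p - r ^ p) / (4 * ε ^ 2)|)) * ‖v 1 - v 0‖) ∧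
    Filter.Tendsto v Filter.atTop (nhds vstar) :=
  statement18_general (P := fun ξ ↦ WithLp.toLp 2 fun i ↦ S (ξ i))
    (convexOn_sum_apply_add_norm_sq (convexOn_Wpot_add_sq hp hε0 hεr)) (abs_nonneg _) hγ.le hT.le
    hAn.le hωl hωu (fun ξ ↦ isProx_sum_apply fun i ↦ hS (ξ i)) hvstar fun n ↦ PiLp.ext (hiter n)
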